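/- arXiv:2305.04872 — 5 statements merged into one kernel-verified Lean document; each statement's English description precedes it below -/
import Mathlib

section
/- (Lemma 2.) Let (Ω,ℱ,μ) be a measure space, let X be a Souslin space with Borel σ-algebra B_X, let z : (Ω,ℱ) → (X,B_X) be measurable, and let E ∈ ℱ satisfy μ(E) < +∞. Then there exists a sequence (E_n)_{n∈ℕ} in ℱ such that for every n ∈ ℕ, E_n ⊆ E and the closure of z(E_n) in X is compact, and μ(E) = μ(⋃_{n∈ℕ} E_n). -/
/-!
The pushforward `ν` of `μ.restrict E` under `z` is a finite Borel measure on a Souslin space, and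
such a measure is tight. To see this, write `X` as a continuous image `g` of the Baire space
`ℕ → ℕ` and fix `c < ν X`. Since the outer measure `ν` is continuous along increasing unions of
arbitrary sets, bounds `n 0, n 1, …` can be chosen one after another so that
`c < ν (g '' {x | ∀ i < k, x i ≤ n i})` for every `k`. The full box `{x | ∀ i, x i ≤ n i}` is
compact, and its image `K` is exactly the intersection of the closures of the images of the
partial boxes (`iInter_closure_image_box`), so `c ≤ ν K` by continuity from above
(`exists_isCompact_le_measure`). Taking `c` along a sequence increasing to `ν X = μ E`, the sets
`E ∩ z ⁻¹' K` are as required.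
-/

open MeasureTheory Topology Set
open scoped ENNReal NNReal

noncomputable section

/-- A Hausdorff topological space is a *Souslin space* if it is the image of a Polish
space under a continuous surjection. -/
def IsSouslin (X : Type*) [TopologicalSpace X] : Prop :=
  ∃ (P : Type) (tP : TopologicalSpace P), @PolishSpace P tP ∧
    ∃ f : P → X, @Continuous P X tP _ f ∧ Function.Surjective f

/-- An open neighbourhood of the compact box `∏ [0, n i]` contains a partial box, in which only
finitely many coordinates are bounded. -/
lemma exists_box_subset (n : ℕ → ℕ) (U : Set (ℕ → ℕ)) (hU : IsOpen U)
    (h : {x : ℕ → ℕ | ∀ i, x i ≤ n i} ⊆ U) :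
    ∃ k, {x : ℕ → ℕ | ∀ i < k, x i ≤ n i} ⊆ U := by
  by_contra! hcon
  simp only [Set.not_subset] at hcon
  choose x hx hxU using hcon
  have hcomp : IsCompact {x : ℕ → ℕ | ∀ i, x i ≤ n i} := by
    have := isCompact_univ_pi (s := fun i => Set.Iic (n i)) fun i => (Set.finite_Iic _).isCompact
    simpa [Set.pi] using this
  -- The truncations `x k ⊓ n` lie in the box, and agree with `x k` in the first `k` coordinates.
  obtain ⟨y, hy, φ, hφ, hlim⟩ := hcomp.tendsto_subseq (x := fun k i => min (x k i) (n i))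
    (fun k i => min_le_right _ _)
  have hlim' : Filter.Tendsto (fun j => x (φ j)) Filter.atTop (𝓝 y) := by
    rw [tendsto_pi_nhds] at hlim ⊢
    intro i
    refine (hlim i).congr' ?_
    filter_upwards [Filter.eventually_gt_atTop i] with j hj
    exact min_eq_left (hx (φ j) i (hj.trans_le (hφ.id_le j)))
  obtain ⟨j, hj⟩ := (hlim'.eventually (hU.mem_nhds (h hy))).exists
  exact hxU _ hj

lemma iInter_closure_image_box {X : Type*} [TopologicalSpace X] [T2Space X]
    (g : (ℕ → ℕ) → X) (hg : Continuous g) (n : ℕ → ℕ)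
    (hK : IsCompact (g '' {x | ∀ i, x i ≤ n i})) :
    ⋂ k, closure (g '' {x | ∀ i < k, x i ≤ n i}) = g '' {x | ∀ i, x i ≤ n i} := by
  apply Set.Subset.antisymm
  · intro y hy
    by_contra hyK
    obtain ⟨U, V, hU, hV, hKU, hyV, hUV⟩ :=
      SeparatedNhds.of_isCompact_isCompact hK isCompact_singleton
        (Set.disjoint_singleton_right.2 hyK)
    obtain ⟨k, hk⟩ := exists_box_subset n (g ⁻¹' U) (hU.preimage hg) (Set.image_subset_iff.1 hKU)
    obtain ⟨w, hwV, hwU⟩ := mem_closure_iff.1 (Set.mem_iInter.1 hy k) V hV (hyV rfl)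
    exact Set.disjoint_left.1 hUV (Set.image_subset_iff.2 hk hwU) hwV
  · refine Set.subset_iInter fun k => subset_closure.trans' (Set.image_mono ?_)
    exact fun x hx i _ => hx i

/-- Tightness of finite Borel measures on a Hausdorff continuous image of the Baire space. -/
lemma exists_isCompact_le_measure {X : Type*} [TopologicalSpace X] [T2Space X]
    [MeasurableSpace X] [BorelSpace X] (ν : Measure X) [IsFiniteMeasure ν]
    (g : (ℕ → ℕ) → X) (hg : Continuous g) (hsurj : Function.Surjective g)
    (c : ℝ≥0∞) (hc : c < ν Set.univ) :
    ∃ K : Set X, IsCompact K ∧ c ≤ ν K := by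
  have step : ∀ (k : ℕ) (A : Set (ℕ → ℕ)), ∃ m : ℕ,
      c < ν (g '' A) → c < ν (g '' (A ∩ {x | x k ≤ m})) := by
    intro k A
    by_cases hA : c < ν (g '' A)
    · have hmono : Monotone fun m : ℕ => g '' (A ∩ {x | x k ≤ m}) := fun a b hab =>
        Set.image_mono (Set.inter_subset_inter_right _ fun x hx => le_trans hx hab)
      have hun : ⋃ m : ℕ, g '' (A ∩ {x | x k ≤ m}) = g '' A := by
        rw [← Set.image_iUnion, ← Set.inter_iUnion]
        congr 1
        exact Set.inter_eq_left.2 fun x _ => Set.mem_iUnion.2 ⟨x k, le_refl (x k)⟩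
      rw [← hun, hmono.measure_iUnion, lt_iSup_iff] at hA
      exact hA.imp fun m hm _ => hm
    · exact ⟨0, fun h => absurd h hA⟩
  choose m hm using step
  let B : ℕ → Set (ℕ → ℕ) := fun k => Nat.rec Set.univ (fun k A => A ∩ {x | x k ≤ m k A}) k
  have hBsucc : ∀ k, B (k + 1) = B k ∩ {x | x k ≤ m k (B k)} := fun k => rfl
  have hB : ∀ k, c < ν (g '' B k) := by
    intro k
    induction k with
    | zero =>
      change c < ν (g '' Set.univ)
      rwa [Set.image_univ, hsurj.range_eq]
    | succ k ih => exact hm k _ ih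
  let n : ℕ → ℕ := fun k => m k (B k)
  have hBn : ∀ k, B k = {x | ∀ i < k, x i ≤ n i} := by
    intro k
    induction k with
    | zero =>
      change Set.univ = _
      simp
    | succ k ih =>
      rw [hBsucc]
      ext x
      simp only [Set.mem_inter_iff, Set.mem_ofPred_eq, Nat.forall_lt_succ_right]
      exact and_congr_left fun _ => by rw [ih]; rfl
  have hcomp : IsCompact (g '' {x | ∀ i, x i ≤ n i}) := by
    have := isCompact_univ_pi (s := fun i => Set.Iic (n i)) fun i => (Set.finite_Iic _).isCompact
    exact IsCompact.image (by simpa [Set.pi] using this) hg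
  refine ⟨_, hcomp, ?_⟩
  have hanti : Antitone fun k => closure (g '' {x : ℕ → ℕ | ∀ i < k, x i ≤ n i}) :=
    fun a b hab => closure_mono (Set.image_mono fun x hx i hi => hx i (hi.trans_le hab))
  rw [← iInter_closure_image_box g hg n hcomp,
    hanti.measure_iInter (fun k => isClosed_closure.measurableSet.nullMeasurableSet)
      ⟨0, measure_ne_top _ _⟩]
  refine le_iInf fun k => ((hB k).le.trans ?_)
  rw [hBn k]
  exact measure_mono subset_closure

/-- **Lemma 2.**  If `z` is a measurable mapping from a measure space `Ω` to a Souslin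
space `X` and `E` is a measurable set of finite measure, then there is a sequence `(Eₙ)` of
measurable subsets of `E` such that each `z(Eₙ)` has compact closure and
`μ(E) = μ(⋃ₙ Eₙ)`. -/
theorem exists_subsets_with_compact_closure_image
    {Ω : Type*} [MeasurableSpace Ω] (μ : Measure Ω)
    {X : Type*} [TopologicalSpace X] [T2Space X] [MeasurableSpace X] [BorelSpace X]
    (hX : IsSouslin X)
    (z : Ω → X) (hz : Measurable z)
    (E : Set Ω) (hE : MeasurableSet E) (hEfin : μ E < ⊤) :
    ∃ En : ℕ → Set Ω,
      (∀ n, MeasurableSet (En n) ∧ En n ⊆ E ∧ IsCompact (closure (z '' En n))) ∧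
      μ E = μ (⋃ n, En n) := by
  rcases eq_or_ne (μ E) 0 with h0 | h0
  · exact ⟨fun _ => ∅, by simp, by simp [h0]⟩
  obtain ⟨P, tP, hP, f, hf, hfs⟩ := hX
  have hne : E.Nonempty := nonempty_of_measure_ne_zero h0
  have : Nonempty P := ⟨(hfs (z hne.some)).choose⟩
  obtain ⟨g, hg, hgs⟩ := PolishSpace.exists_nat_nat_continuous_surjective P
  have : IsFiniteMeasure (μ.restrict E) := ⟨by simpa using hEfin⟩
  have hν : ∀ S, MeasurableSet S → (μ.restrict E).map z S = μ (E ∩ z ⁻¹' S) := fun S hS => by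
    rw [Measure.map_apply hz hS, Measure.restrict_apply (hz hS), Set.inter_comm]
  obtain ⟨u, -, hu, hlim⟩ := exists_seq_strictMono_tendsto' (pos_iff_ne_zero.2 h0)
  have hK : ∀ j, ∃ K : Set X, IsCompact K ∧ u j ≤ (μ.restrict E).map z K := fun j =>
    exists_isCompact_le_measure _ (f ∘ g) (hf.comp hg) (hfs.comp hgs) (u j) (by
      rw [hν _ MeasurableSet.univ]
      simpa using (hu j).2)
  choose K hKc hKu using hK
  refine ⟨fun j => E ∩ z ⁻¹' K j, fun j => ⟨hE.inter (hz (hKc j).measurableSet),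
    Set.inter_subset_left, ?_⟩, le_antisymm ?_ ?_⟩
  · refine (hKc j).of_isClosed_subset isClosed_closure (closure_minimal ?_ (hKc j).isClosed)
    exact Set.image_subset_iff.2 Set.inter_subset_right
  · refine le_of_tendsto' hlim fun j => ?_
    have hj := hKu j
    rw [hν _ (hKc j).measurableSet] at hj
    exact hj.trans (measure_mono (Set.subset_iUnion (fun j => E ∩ z ⁻¹' K j) j))
  · exact measure_mono (Set.iUnion_subset fun j => Set.inter_subset_left)
end
end

section
/- (Theorem 3(i)(d).) Let X be a Souslin space with Borel σ-algebra B_X, let (Ω,ℱ) be a measurable space, and let φ : Ω×X → [−∞,+∞] be ℱ⊗B_X-measurable such that for every ω ∈ Ω the section φ_ω = φ(ω,·) is upper semicontinuous and epi φ_ω is nonempty. Then φ is a normal integrand. -/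
/-!
For an upper semicontinuous `f`, the strict epigraph `{(x, ξ) | f x < ξ}` is open in `X × ℝ`, and
it is dense in `epi f` because any point of `epi f` can be moved up slightly in the real coordinate.
A Souslin space is separable, so `X × ℝ` has a dense sequence `(eₙ)`, and the terms of `(eₙ)` lying
in the strict epigraph are then dense in `epi f`. For `φ_ω` these terms are selected measurably:
the `n`-th selection at `ω` is `eₙ` if `eₙ` lies in the strict epigraph of `φ_ω`, and otherwise the
first term of the sequence that does. Such selections have the form `e_{N(ω)}` with `N : Ω → ℕ`
measurable, so no measurable selection theorem is needed, and of the Souslin property only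
separability enters.
-/

open MeasureTheory Topology Set
open scoped ENNReal NNReal

noncomputable section

/-- The epigraph of an extended-real-valued function. -/
def epi {X : Type*} (f : X → EReal) : Set (X × ℝ) :=
  {p : X × ℝ | f p.1 ≤ (p.2 : EReal)}

/-- A jointly measurable integrand `φ` on `Ω × X` (`X` a Souslin space) is a *normal
integrand* if there are sequences of measurable mappings `(xₙ)` and measurable real
functions `(ρₙ)` such that for every `ω`, `(xₙ(ω),ρₙ(ω))` lies in `epi φ(ω,·)` and the
closure of `epi φ(ω,·)` equals the closure of `{(xₙ(ω),ρₙ(ω)) : n ∈ ℕ}`. -/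
def NormalIntegrand {Ω X : Type*} [MeasurableSpace Ω] [TopologicalSpace X]
    [MeasurableSpace X] (φ : Ω → X → EReal) : Prop :=
  Measurable (Function.uncurry φ) ∧
  ∃ (x : ℕ → Ω → X) (ρ : ℕ → Ω → ℝ),
    (∀ n, Measurable (x n)) ∧ (∀ n, Measurable (ρ n)) ∧
    ∀ ω, (∀ n, (x n ω, ρ n ω) ∈ epi (φ ω)) ∧
      closure (epi (φ ω)) = closure {p : X × ℝ | ∃ n, p = (x n ω, ρ n ω)}

/-- The strict epigraph of an extended-real-valued function. -/
def strictEpi {X : Type*} (f : X → EReal) : Set (X × ℝ) :=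
  {p : X × ℝ | f p.1 < (p.2 : EReal)}

lemma strictEpi_subset_epi {X : Type*} (f : X → EReal) : strictEpi f ⊆ epi f :=
  fun _ hp => le_of_lt (show f _ < _ from hp)

lemma UpperSemicontinuous.isOpen_strictEpi {X : Type*} [TopologicalSpace X] {f : X → EReal}
    (hf : UpperSemicontinuous f) : IsOpen (strictEpi f) := by
  rw [isOpen_iff_mem_nhds]
  rintro ⟨x, ξ⟩ (h : f x < (ξ : EReal))
  obtain ⟨q, hq₁, hq₂⟩ := EReal.lt_iff_exists_real_btwn.1 h
  have h₂ : ∀ᶠ r in 𝓝 ξ, q < r := eventually_gt_nhds (EReal.coe_lt_coe_iff.1 hq₂)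
  filter_upwards [(hf x q hq₁).prod_nhds h₂] with p hp
  exact hp.1.trans (EReal.coe_lt_coe_iff.2 hp.2)

lemma epi_subset_closure_strictEpi {X : Type*} [TopologicalSpace X] (f : X → EReal) :
    epi f ⊆ closure (strictEpi f) := by
  rintro ⟨x, ξ⟩ (h : f x ≤ (ξ : EReal))
  have hξ : ξ ∈ closure (Ioi ξ) := by simp
  have hmaps : MapsTo (fun r : ℝ => (x, r)) (Ioi ξ) (strictEpi f) :=
    fun r hr => h.trans_lt (EReal.coe_lt_coe_iff.2 hr)
  exact map_mem_closure (by fun_prop) hξ hmaps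

lemma IsSouslin.separableSpace {X : Type*} [TopologicalSpace X] (h : IsSouslin X) :
    TopologicalSpace.SeparableSpace X := by
  obtain ⟨P, tP, hP, f, hf, hsurj⟩ := h
  exact hsurj.denseRange.separableSpace hf

/-- **Theorem 3(i)(d).**  A jointly measurable integrand with nonempty epigraphs and upper
semicontinuous sections, with values in a Souslin space, is a normal integrand. -/
theorem normalIntegrand_of_upperSemicontinuous
    {X : Type*} [TopologicalSpace X] [T2Space X] [MeasurableSpace X] [BorelSpace X]
    (hSouslin : IsSouslin X)
    {Ω : Type*} [MeasurableSpace Ω]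
    (φ : Ω → X → EReal)
    (hφmeas : Measurable (Function.uncurry φ))
    (husc : ∀ ω, UpperSemicontinuous (φ ω))
    (hepi : ∀ ω, (epi (φ ω)).Nonempty) :
    NormalIntegrand φ := by
  classical
  refine ⟨hφmeas, ?_⟩
  -- If `Ω` is empty then `X` may be empty too, and there is no dense sequence to choose.
  rcases isEmpty_or_nonempty Ω with hΩ | ⟨⟨ω₀⟩⟩
  · exact ⟨fun _ => isEmptyElim, fun _ => isEmptyElim, fun _ => measurable_of_empty _,
      fun _ => measurable_of_empty _, isEmptyElim⟩
  have := hSouslin.separableSpace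
  have : Nonempty (X × ℝ) := (hepi ω₀).to_type
  obtain ⟨e, he⟩ := TopologicalSpace.exists_dense_seq (X × ℝ)
  have hex : ∀ ω, ∃ n, e n ∈ strictEpi (φ ω) := fun ω =>
    he.exists_mem_open (husc ω).isOpen_strictEpi
      (closure_nonempty_iff.1 ((hepi ω).mono (epi_subset_closure_strictEpi _)))
  have hmeas : ∀ n, MeasurableSet {ω | e n ∈ strictEpi (φ ω)} := fun n =>
    (hφmeas.comp (measurable_prodMk_right (y := (e n).1))) measurableSet_Iio
  let N : ℕ → Ω → ℕ := fun n ω => if e n ∈ strictEpi (φ ω) then n else Nat.find (hex ω)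
  have hN : ∀ n, Measurable (N n) := fun n =>
    Measurable.ite (hmeas n) measurable_const (measurable_find hex hmeas)
  have hNmem : ∀ n ω, e (N n ω) ∈ strictEpi (φ ω) := by
    intro n ω
    by_cases h : e n ∈ strictEpi (φ ω)
    · simpa only [N, if_pos h] using h
    · simpa only [N, if_neg h] using Nat.find_spec (hex ω)
  refine ⟨fun n ω => (e (N n ω)).1, fun n ω => (e (N n ω)).2,
    fun n => (measurable_from_nat (f := fun k => (e k).1)).comp (hN n),
    fun n => (measurable_from_nat (f := fun k => (e k).2)).comp (hN n),
    fun ω => ⟨fun n => strictEpi_subset_epi _ (hNmem n ω), ?_⟩⟩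
  apply subset_antisymm
  · refine closure_minimal ((epi_subset_closure_strictEpi _).trans ?_) isClosed_closure
    refine closure_minimal ?_ isClosed_closure
    refine (he.open_subset_closure_inter (husc ω).isOpen_strictEpi).trans (closure_mono ?_)
    rintro _ ⟨hmem, n, rfl⟩
    exact ⟨n, by simp only [N, if_pos hmem]⟩
  · refine closure_mono ?_
    rintro _ ⟨n, rfl⟩
    exact strictEpi_subset_epi _ (hNmem n ω)
end
end

section
/- (Theorem 3(iii).) Let X be a regular Souslin space (regular: for every closed set C and every point x ∉ C there exist disjoint open sets V, W with C ⊆ V and x ∈ W), let (Ω,ℱ) be a measurable space, and let φ : Ω×X → [−∞,+∞] be such that for every ω ∈ Ω the section φ_ω = φ(ω,·) is continuous with nonempty epigraph, and for every x ∈ X the function φ(·,x) is ℱ-measurable. Then φ is a normal integrand; in particular, φ is ℱ⊗B_X-measurable. -/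
/-!
Let `f : P → X` be a continuous surjection from a Polish space.

*Joint measurability.* The images `f '' B` of a countable basis of `P` form a countable network of
`X`: if `φ(ω,x) < b` then some `f '' B` contains `x` and lies in `{φ_ω ≤ b}`, and then so does its
closure. Hence `{φ < a}` is the union, over rational `b < a` and basic `B`, of the rectangles
`{ω | φ_ω ≤ b on f '' B} × closure (f '' B)`. The first factor is measurable because, by continuity,
the inequality need only be checked on the image of `B ∩ Q` with `Q` countable and dense in `P`.

*Dense selections.* Fix a dense sequence `(d_k)` in `X`. Since each `φ_ω` is upper semicontinuous,
the pairs `(d_k, r)`, `r` rational, that lie in `epi φ_ω` are dense in it. The pairs outside of the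
epigraph are replaced by the first enumerated pair inside it, which depends measurably on `ω`.
-/

open MeasureTheory Topology Set
open scoped ENNReal NNReal

noncomputable section

open TopologicalSpace in
/-- A Carathéodory integrand on a continuous image of a Polish space is jointly measurable. -/
lemma measurable_uncurry_of_caratheodory
    {X : Type*} [TopologicalSpace X] [MeasurableSpace X] [BorelSpace X]
    (hSouslin : IsSouslin X) {Ω : Type*} [MeasurableSpace Ω] (φ : Ω → X → EReal)
    (hcont : ∀ ω, Continuous (φ ω)) (hmeas : ∀ v : X, Measurable fun ω => φ ω v) :
    Measurable (Function.uncurry φ) := by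
  obtain ⟨P, tP, hP, f, hf, hsurj⟩ := hSouslin
  obtain ⟨Q, hQc, hQd⟩ := exists_countable_dense P
  refine measurable_of_Iio fun a => ?_
  have key : Function.uncurry φ ⁻¹' Iio a =
      ⋃ b ∈ {b : ℚ | ((b : ℝ) : EReal) < a}, ⋃ B ∈ countableBasis P,
        {ω | ∀ q ∈ B ∩ Q, φ ω (f q) ≤ ((b : ℝ) : EReal)} ×ˢ closure (f '' B) := by
    ext ⟨ω, x⟩
    simp only [mem_preimage, Function.uncurry_apply_pair, mem_Iio, mem_iUnion, mem_prod,
      mem_ofPred_eq, exists_prop]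
    constructor
    · intro h
      obtain ⟨b, hb1, hb2⟩ := EReal.lt_iff_exists_rat_btwn.1 h
      obtain ⟨p, rfl⟩ := hsurj x
      have hopen : IsOpen {p : P | φ ω (f p) < ((b : ℝ) : EReal)} :=
        isOpen_lt ((hcont ω).comp hf) continuous_const
      obtain ⟨B, hB, hpB, hBs⟩ :=
        (isBasis_countableBasis P).exists_subset_of_mem_open (a := p) hb1 hopen
      exact ⟨b, hb2, B, hB, fun q hq => (hBs hq.1).le, subset_closure ⟨p, hpB, rfl⟩⟩
    · rintro ⟨b, hb, B, hB, hω, hx⟩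
      have hcl : IsClosed {p : P | φ ω (f p) ≤ ((b : ℝ) : EReal)} :=
        isClosed_le ((hcont ω).comp hf) continuous_const
      have hBP : B ⊆ {p : P | φ ω (f p) ≤ ((b : ℝ) : EReal)} :=
        (hQd.open_subset_closure_inter (isOpen_of_mem_countableBasis hB)).trans
          (closure_minimal hω hcl)
      have hclX : IsClosed {y : X | φ ω y ≤ ((b : ℝ) : EReal)} :=
        isClosed_le (hcont ω) continuous_const
      exact (closure_minimal (image_subset_iff.2 hBP) hclX hx).trans_lt hb
  rw [key]
  refine MeasurableSet.biUnion (to_countable _) fun b _ =>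
    MeasurableSet.biUnion (countable_countableBasis P) fun B _ => ?_
  refine MeasurableSet.prod ?_ isClosed_closure.measurableSet
  have : {ω | ∀ q ∈ B ∩ Q, φ ω (f q) ≤ ((b : ℝ) : EReal)} =
      ⋂ q ∈ B ∩ Q, {ω | φ ω (f q) ≤ ((b : ℝ) : EReal)} := by
    ext ω; simp
  rw [this]
  exact MeasurableSet.biInter (hQc.mono inter_subset_right) fun q _ =>
    measurableSet_le (hmeas _) measurable_const

/-- Among the points of `{d_k} × ℚ` with `(d_k)` dense, those lying in the epigraph of a continuous
function form a dense subset of the epigraph. -/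
lemma exists_rat_mem_epi {X : Type*} [TopologicalSpace X] {g : X → EReal} (hg : Continuous g)
    {d : ℕ → X} (hd : DenseRange d) {p : X × ℝ} (hp : p ∈ epi g) {W : Set (X × ℝ)}
    (hW : W ∈ 𝓝 p) :
    ∃ (k : ℕ) (r : ℚ), (d k, (r : ℝ)) ∈ W ∧ (d k, (r : ℝ)) ∈ epi g := by
  obtain ⟨x, ξ⟩ := p
  obtain ⟨U, hU, V, hV, hUV⟩ := mem_nhds_prod_iff.1 hW
  obtain ⟨ε, hε, hεV⟩ := Metric.mem_nhds_iff.1 hV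
  -- A rational strictly above `ξ` leaves room for `g (d k)` to exceed `g x` slightly.
  obtain ⟨r, hr1, hr2⟩ := exists_rat_btwn (show ξ < ξ + ε by linarith)
  have hlt : g x < ((r : ℝ) : EReal) :=
    lt_of_le_of_lt (show g x ≤ (ξ : EReal) from hp) (EReal.coe_lt_coe_iff.2 hr1)
  have hN : U ∩ {y | g y < ((r : ℝ) : EReal)} ∈ 𝓝 x :=
    Filter.inter_mem hU ((isOpen_lt hg continuous_const).mem_nhds hlt)
  obtain ⟨_, ⟨k, rfl⟩, hy⟩ := hd.inter_nhds_nonempty hN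
  have hlt' : g (d k) < ((r : ℝ) : EReal) := hy.2
  refine ⟨k, r, hUV ⟨hy.1, hεV ?_⟩, show g (d k) ≤ ((r : ℝ) : EReal) from hlt'.le⟩
  rw [Metric.mem_ball, Real.dist_eq, abs_lt]
  constructor <;> linarith

/-- **Theorem 3(iii).**  Let `X` be a regular Souslin space and let `φ : Ω × X → [−∞,+∞]`
be such that every section `φ(ω,·)` is continuous with nonempty epigraph and every
`φ(·,x)` is measurable.  Then `φ` is a normal integrand; in particular it is jointly
measurable. -/
theorem normalIntegrand_of_caratheodory_regular
    {X : Type*} [TopologicalSpace X] [T2Space X] [RegularSpace X]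
    [MeasurableSpace X] [BorelSpace X]
    (hSouslin : IsSouslin X)
    {Ω : Type*} [MeasurableSpace Ω]
    (φ : Ω → X → EReal)
    (hcont : ∀ ω, Continuous (φ ω))
    (hepi : ∀ ω, (epi (φ ω)).Nonempty)
    (hmeas : ∀ v : X, Measurable fun ω => φ ω v) :
    NormalIntegrand φ := by
  refine ⟨measurable_uncurry_of_caratheodory hSouslin φ hcont hmeas, ?_⟩
  -- `X` may be empty only if `Ω` is, and then there is no dense sequence to choose.
  rcases isEmpty_or_nonempty Ω with hΩ | ⟨⟨ω₀⟩⟩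
  · exact ⟨fun _ ω => hΩ.elim ω, fun _ ω => hΩ.elim ω, fun _ => measurable_of_empty _,
      fun _ => measurable_of_empty _, fun ω => hΩ.elim ω⟩
  have : Nonempty X := ⟨(hepi ω₀).some.1⟩
  have : TopologicalSpace.SeparableSpace X := by
    obtain ⟨P, tP, hP, f, hf, hsurj⟩ := hSouslin
    exact hsurj.denseRange.separableSpace hf
  set d := TopologicalSpace.denseSeq X
  have hd : DenseRange d := TopologicalSpace.denseRange_denseSeq X
  obtain ⟨e, he⟩ := exists_surjective_nat (ℕ × ℚ)
  let c : ℕ → X × ℝ := fun n => (d (e n).1, ((e n).2 : ℝ))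
  have hdense : ∀ ω, ∀ p ∈ epi (φ ω), ∀ W ∈ 𝓝 p, ∃ n, c n ∈ W ∧ c n ∈ epi (φ ω) := by
    intro ω p hp W hW
    obtain ⟨k, r, h1, h2⟩ := exists_rat_mem_epi (hcont ω) hd hp hW
    obtain ⟨n, hn⟩ := he (k, r)
    exact ⟨n, by simpa [c, hn] using h1, by simpa [c, hn] using h2⟩
  have hex : ∀ ω, ∃ n, c n ∈ epi (φ ω) := fun ω => by
    obtain ⟨p, hp⟩ := hepi ω
    obtain ⟨n, -, hn⟩ := hdense ω p hp univ Filter.univ_mem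
    exact ⟨n, hn⟩
  have hS : ∀ n, MeasurableSet {ω | c n ∈ epi (φ ω)} := fun n =>
    measurableSet_le (hmeas _) measurable_const
  classical
  let idx : ℕ → Ω → ℕ := fun n ω => if c n ∈ epi (φ ω) then n else Nat.find (hex ω)
  have hidx : ∀ n, Measurable (idx n) := fun n =>
    Measurable.ite (hS n) measurable_const (measurable_find hex hS)
  have hmem : ∀ n ω, c (idx n ω) ∈ epi (φ ω) := fun n ω => by
    by_cases h : c n ∈ epi (φ ω)
    · simpa only [idx, if_pos h] using h
    · simpa only [idx, if_neg h] using Nat.find_spec (hex ω)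
  refine ⟨fun n ω => (c (idx n ω)).1, fun n ω => (c (idx n ω)).2,
    fun n => (measurable_from_nat (f := fun m => (c m).1)).comp (hidx n),
    fun n => (measurable_from_nat (f := fun m => (c m).2)).comp (hidx n),
    fun ω => ⟨fun n => hmem n ω, Subset.antisymm ?_ ?_⟩⟩
  · refine closure_minimal (fun p hp => mem_closure_iff_nhds.2 fun W hW => ?_) isClosed_closure
    obtain ⟨n, hnW, hn⟩ := hdense ω p hp W hW
    exact ⟨c n, hnW, n, by simp only [idx, if_pos hn]⟩
  · refine closure_mono ?_
    rintro _ ⟨n, rfl⟩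
    exact hmem n ω
end
end

section
/- (Example 1.) Let X be a separable real Banach space with its norm topology and Borel σ-algebra B_X, let (Ω,ℱ,μ) be a σ-finite measure space with μ(Ω) ≠ 0, let 𝒳 be a vector subspace of L(Ω;X), and let φ : Ω×X → [−∞,+∞] be ℱ⊗B_X-measurable with epi φ_ω nonempty for every ω ∈ Ω. Suppose that: (i) for every A ∈ ℱ with μ(A) < +∞ and every measurable z : Ω → X with sup_{ω∈Ω} ‖z(ω)‖ < +∞, one has 1_A·z ∈ 𝒳; (ii) φ is a normal integrand; (iii) there exists x̄ ∈ 𝒳 such that ∫_Ω max{φ(ω,x̄(ω)),0} μ(dω) < +∞. Then inf_{x∈𝒳} ∫_Ω φ(ω,x(ω)) μ(dω) = ∫_Ω inf_{x∈X} φ(ω,x) μ(dω). -/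
/-!
Write `m ω = ⨅ v, φ ω v`. The inequality `≥` is monotonicity of the integral.

For `≤`, normality enters in one way only: density of the sequence `(xₙ(ω), ρₙ(ω))` in the epigraph
gives `m = ⨅ n, ρₙ` (`iInf_eq_iInf_of_dense`). Hence `m` is measurable, and for every measurable
real `α > m`, taking at each `ω` the first `n` with `ρₙ(ω) < α(ω)` produces a measurable `y` with
`φ(ω, y(ω)) ≤ α(ω)` (`exists_measurable_selection`). No measurable selection theorem is needed.

Given a real `c > ∫ m`, σ-finiteness provides a strictly positive integrable `δ` of small integral,
and `α = m⁺ - min(m⁻, kδ) + δ` is a real integrable function with `m < α` and, for large `k`,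
`∫ α < c` by monotone convergence (`exists_integrable_gt`); this covers `∫ m = -∞` as well. The
selection `y` attached to `α` need not belong to `𝓧`, so it is glued to `xbar`: with `Sₙ ↑ Ω` of finite
measure and `Bₙ = Sₙ ∩ {‖y - xbar‖ ≤ n}`, the map `xbar + 1_{Bₙ} (y - xbar)` lies in `𝓧`, and `φ` along
it is bounded by `α` on `Bₙ` and by `φ(·, xbar)⁺` off `Bₙ`. These bounds converge to `α`, dominated by
`|α| + φ(·, xbar)⁺`, so their integrals are eventually less than `c`.
-/


open MeasureTheory Topology Set
open scoped ENNReal NNReal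

noncomputable section

/-- The positive part of an extended real, as an extended nonnegative real. -/
def EReal.posToENNReal (x : EReal) : ℝ≥0∞ :=
  if x = ⊤ then ⊤ else ENNReal.ofReal x.toReal

/-- The integral of an extended-real-valued function `ρ`, with the convention that it is
the usual Lebesgue integral (positive part minus negative part), except that it equals `+∞`
as soon as the integral of the positive part `max{ρ,0}` is `+∞`. -/
def eIntegral {Ω : Type*} [MeasurableSpace Ω] (μ : Measure Ω) (ρ : Ω → EReal) : EReal :=
  if ∫⁻ ω, (ρ ω).posToENNReal ∂μ = ⊤ then ⊤
  else ((∫⁻ ω, (ρ ω).posToENNReal ∂μ : ℝ≥0∞) : EReal)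
    - ((∫⁻ ω, (-(ρ ω)).posToENNReal ∂μ : ℝ≥0∞) : EReal)

/-- `EReal.posToENNReal` unfolds to Mathlib's `EReal.toENNReal`, whose API is used throughout. -/
lemma posToENNReal_mono {a b : EReal} (h : a ≤ b) : a.posToENNReal ≤ b.posToENNReal :=
  EReal.toENNReal_le_toENNReal h

lemma eIntegral_mono_ae {Ω : Type*} [MeasurableSpace Ω] {μ : Measure Ω} {f g : Ω → EReal}
    (h : f ≤ᵐ[μ] g) : eIntegral μ f ≤ eIntegral μ g := by
  have h1 : ∫⁻ ω, (f ω).posToENNReal ∂μ ≤ ∫⁻ ω, (g ω).posToENNReal ∂μ :=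
    lintegral_mono_ae (h.mono fun ω hω => posToENNReal_mono hω)
  have h2 : ∫⁻ ω, (-(g ω)).posToENNReal ∂μ ≤ ∫⁻ ω, (-(f ω)).posToENNReal ∂μ :=
    lintegral_mono_ae (h.mono fun ω hω => posToENNReal_mono (EReal.neg_le_neg_iff.2 hω))
  unfold eIntegral
  by_cases hg : ∫⁻ ω, (g ω).posToENNReal ∂μ = ⊤
  · simp [hg]
  · have hf : ∫⁻ ω, (f ω).posToENNReal ∂μ ≠ ⊤ := ne_top_of_le_ne_top hg h1
    rw [if_neg hg, if_neg hf]
    exact EReal.sub_le_sub (EReal.coe_ennreal_le_coe_ennreal_iff.2 h1)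
      (EReal.coe_ennreal_le_coe_ennreal_iff.2 h2)

lemma posToENNReal_coe (r : ℝ) : (r : EReal).posToENNReal = ENNReal.ofReal r := by
  simp [EReal.posToENNReal]

lemma eIntegral_coe {Ω : Type*} [MeasurableSpace Ω] {μ : Measure Ω} {g : Ω → ℝ}
    (hg : Integrable g μ) : eIntegral μ (fun ω => (g ω : EReal)) = ((∫ ω, g ω ∂μ : ℝ) : EReal) := by
  have h1 : ∫⁻ ω, ENNReal.ofReal (g ω) ∂μ ≠ ⊤ := hg.lintegral_lt_top.ne
  have h2 : ∫⁻ ω, ENNReal.ofReal (-g ω) ∂μ ≠ ⊤ := hg.neg.lintegral_lt_top.ne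
  unfold eIntegral
  simp_rw [← EReal.coe_neg, posToENNReal_coe]
  rw [if_neg h1, integral_eq_lintegral_pos_part_sub_lintegral_neg_part hg, EReal.coe_sub,
    EReal.coe_ennreal_toReal h1, EReal.coe_ennreal_toReal h2]

/-- Infimizing a function amounts to infimizing the heights of a dense sequence of its epigraph. -/
lemma iInf_eq_iInf_of_dense {X : Type*} [TopologicalSpace X] (f : X → EReal)
    (x : ℕ → X) (ρ : ℕ → ℝ) (hmem : ∀ n, (x n, ρ n) ∈ epi f)
    (hcl : closure (epi f) = closure {p : X × ℝ | ∃ n, p = (x n, ρ n)}) :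
    ⨅ v, f v = ⨅ n, (ρ n : EReal) := by
  apply le_antisymm
  · exact le_iInf fun n => (iInf_le _ (x n)).trans (hmem n)
  · refine le_iInf fun v => le_of_forall_gt fun c hc => ?_
    obtain ⟨ξ, h1, h2⟩ := EReal.lt_iff_exists_real_btwn.1 hc
    have hv : (v, ξ) ∈ closure {p : X × ℝ | ∃ n, p = (x n, ρ n)} :=
      hcl ▸ subset_closure (show f v ≤ (ξ : EReal) from h1.le)
    have hopen : IsOpen {p : X × ℝ | (p.2 : EReal) < c} :=
      isOpen_lt (continuous_coe_real_ereal.comp continuous_snd) continuous_const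
    obtain ⟨p, hp, n, rfl⟩ := mem_closure_iff.1 hv _ hopen h2
    exact (iInf_le _ n).trans_lt hp

/-- A measurable function strictly above the pointwise infimum of a normal integrand is an upper
bound for the integrand along some measurable map. -/
lemma exists_measurable_selection {X Ω : Type*} [MeasurableSpace Ω] [MeasurableSpace X]
    (φ : Ω → X → EReal) (x : ℕ → Ω → X) (ρ : ℕ → Ω → ℝ) (hx : ∀ n, Measurable (x n))
    (hρ : ∀ n, Measurable (ρ n)) (hmem : ∀ ω n, (x n ω, ρ n ω) ∈ epi (φ ω))
    (α : Ω → ℝ) (hα : Measurable α) (hlt : ∀ ω, ⨅ n, (ρ n ω : EReal) < α ω) :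
    ∃ y : Ω → X, Measurable y ∧ ∀ ω, φ ω (y ω) ≤ α ω := by
  classical
  have hex : ∀ ω, ∃ n, ρ n ω < α ω := fun ω => by
    obtain ⟨n, hn⟩ := iInf_lt_iff.1 (hlt ω)
    exact ⟨n, EReal.coe_lt_coe_iff.1 hn⟩
  refine ⟨fun ω => x (Nat.find (hex ω)) ω,
    Measurable.find hx (fun n => measurableSet_lt (hρ n) hα) hex, fun ω => ?_⟩
  exact (hmem ω _).trans (EReal.coe_le_coe_iff.2 (Nat.find_spec (hex ω)).le)

/-- A measurable function with integrable positive part that never equals `+∞` is approximated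
strictly from above by real integrable functions, in the sense of integrals. -/
lemma exists_integrable_gt {Ω : Type*} [MeasurableSpace Ω] {μ : Measure Ω} [SigmaFinite μ]
    (m : Ω → EReal) (hm : Measurable m) (htop : ∀ ω, m ω ≠ ⊤)
    (hpos : ∫⁻ ω, (m ω).posToENNReal ∂μ ≠ ⊤) (c : ℝ) (hc : eIntegral μ m < c) :
    ∃ α : Ω → ℝ, Measurable α ∧ Integrable α μ ∧ (∀ ω, m ω < α ω) ∧ ∫ ω, α ω ∂μ < c := by
  obtain ⟨c', hc', hcc⟩ := EReal.lt_iff_exists_real_btwn.1 hc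
  have hcc : c' < c := EReal.coe_lt_coe_iff.1 hcc
  obtain ⟨δ, hδ0, hδm, hδ⟩ := exists_pos_lintegral_lt_of_sigmaFinite μ
    (ε := ENNReal.ofReal (c - c')) (by simpa using hcc)
  have hPm : Measurable fun ω => (m ω).posToENNReal := measurable_ereal_toENNReal.comp hm
  have hNm : Measurable fun ω => (-(m ω)).posToENNReal := measurable_ereal_toENNReal.comp hm.neg
  set P : Ω → ℝ≥0∞ := fun ω => (m ω).posToENNReal with hP
  set N : Ω → ℝ≥0∞ := fun ω => (-(m ω)).posToENNReal with hN
  set Nk : ℕ → Ω → ℝ≥0∞ := fun k ω => min (N ω) (k * δ ω) with hNk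
  have hδm' : Measurable fun ω => (δ ω : ℝ≥0∞) := hδm.coe_nnreal_ennreal
  have hNkm : ∀ k, Measurable (Nk k) := fun k => hNm.min (hδm'.const_mul _)
  have hδtop : ∫⁻ ω, (δ ω : ℝ≥0∞) ∂μ ≠ ⊤ := hδ.ne_top
  have hNkint : ∀ k, ∫⁻ ω, Nk k ω ∂μ ≠ ⊤ := fun k => by
    refine ne_top_of_le_ne_top ?_ (lintegral_mono fun ω => min_le_right _ _)
    rw [lintegral_const_mul _ hδm']
    exact ENNReal.mul_ne_top (ENNReal.natCast_ne_top k) hδtop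
  have hNktop : ∀ k ω, Nk k ω ≠ ⊤ := fun k ω =>
    ne_top_of_le_ne_top (ENNReal.mul_ne_top (ENNReal.natCast_ne_top k) ENNReal.coe_ne_top)
      (min_le_right _ _)
  have hlim : Filter.Tendsto (fun k => ∫⁻ ω, Nk k ω ∂μ) Filter.atTop (𝓝 (∫⁻ ω, N ω ∂μ)) := by
    refine lintegral_tendsto_of_tendsto_of_monotone (fun k => (hNkm k).aemeasurable)
      (ae_of_all _ fun ω i j hij => ?_) (ae_of_all _ fun ω => ?_)
    · have : (i : ℝ≥0∞) ≤ j := by exact_mod_cast hij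
      exact min_le_min le_rfl (by gcongr)
    · have h1 : Filter.Tendsto (fun k : ℕ => (k : ℝ≥0∞) * δ ω) Filter.atTop (𝓝 (⊤ * δ ω)) :=
        ENNReal.Tendsto.mul_const ENNReal.tendsto_nat_nhds_top (Or.inr ENNReal.coe_ne_top)
      rw [ENNReal.top_mul (by simpa using (hδ0 ω).ne')] at h1
      simpa using (tendsto_const_nhds (x := N ω)).min h1
  have hlt : (((∫⁻ ω, P ω ∂μ).toReal - c' : ℝ) : EReal) < ((∫⁻ ω, N ω ∂μ : ℝ≥0∞) : EReal) := by
    unfold eIntegral at hc'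
    rw [if_neg hpos] at hc'
    change ((∫⁻ ω, P ω ∂μ : ℝ≥0∞) : EReal) - ((∫⁻ ω, N ω ∂μ : ℝ≥0∞) : EReal) < c' at hc'
    by_cases hNt : ∫⁻ ω, N ω ∂μ = ⊤
    · rw [hNt]; exact EReal.coe_lt_top _
    · rw [← EReal.coe_ennreal_toReal hNt, ← EReal.coe_ennreal_toReal hpos, ← EReal.coe_sub,
        EReal.coe_lt_coe_iff] at hc'
      rw [← EReal.coe_ennreal_toReal hNt, EReal.coe_lt_coe_iff]
      linarith
  obtain ⟨k, hk⟩ := (((continuous_coe_ennreal_ereal.tendsto _).comp hlim).eventually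
    (lt_mem_nhds hlt)).exists
  simp only [Function.comp] at hk
  rw [← EReal.coe_ennreal_toReal (hNkint k), EReal.coe_lt_coe_iff] at hk
  have hPtop : ∀ ω, P ω ≠ ⊤ := fun ω => by simp [hP, EReal.posToENNReal, htop ω]
  have iP : Integrable (fun ω => (P ω).toReal) μ :=
    integrable_toReal_of_lintegral_ne_top hPm.aemeasurable hpos
  have iN : Integrable (fun ω => (Nk k ω).toReal) μ :=
    integrable_toReal_of_lintegral_ne_top (hNkm k).aemeasurable (hNkint k)
  have iδ : Integrable (fun ω => (δ ω : ℝ)) μ := by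
    simpa using integrable_toReal_of_lintegral_ne_top hδm'.aemeasurable hδtop
  refine ⟨fun ω => (P ω).toReal - (Nk k ω).toReal + δ ω,
    (hPm.ennreal_toReal.sub (hNkm k).ennreal_toReal).add hδm.coe_nnreal_real,
    (iP.sub iN).add iδ, fun ω => ?_, ?_⟩
  · have hd : (0 : ℝ) < δ ω := hδ0 ω
    induction h : m ω with
    | bot => exact EReal.bot_lt_coe _
    | top => exact absurd h (htop ω)
    | coe r =>
      have h1 : P ω = ENNReal.ofReal r := by simp only [hP, h, posToENNReal_coe]
      have h2 : N ω = ENNReal.ofReal (-r) := by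
        simp only [hN, h, ← EReal.coe_neg, posToENNReal_coe]
      have h3 : (Nk k ω).toReal ≤ (N ω).toReal :=
        ENNReal.toReal_mono (h2 ▸ ENNReal.ofReal_ne_top) (min_le_left _ _)
      rw [h2, ENNReal.toReal_ofReal'] at h3
      rw [EReal.coe_lt_coe_iff]
      beta_reduce
      rw [h1, ENNReal.toReal_ofReal']
      rcases le_total r 0 with hr | hr
      · rw [max_eq_left (by linarith)] at h3
        rw [max_eq_right hr]; linarith
      · rw [max_eq_right (by linarith)] at h3
        rw [max_eq_left hr]; linarith
  · have e1 : ∫ ω, (δ ω : ℝ) ∂μ = (∫⁻ ω, (δ ω : ℝ≥0∞) ∂μ).toReal := by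
      simpa using integral_toReal hδm'.aemeasurable (ae_of_all _ fun ω => ENNReal.coe_lt_top)
    have e2 : (∫⁻ ω, (δ ω : ℝ≥0∞) ∂μ).toReal < c - c' := by
      have := (ENNReal.toReal_lt_toReal hδtop ENNReal.ofReal_ne_top).2 hδ
      rwa [ENNReal.toReal_ofReal (by linarith)] at this
    rw [integral_add (f := fun ω => (P ω).toReal - (Nk k ω).toReal) (iP.sub iN) iδ,
      integral_sub iP iN, e1,
      integral_toReal hPm.aemeasurable (ae_of_all _ fun ω => (hPtop ω).lt_top),
      integral_toReal (hNkm k).aemeasurable (ae_of_all _ fun ω => (hNktop k ω).lt_top)]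
    linarith

/-- **Example 1.**  Let `X` be a separable real Banach space, `(Ω,ℱ,μ)` a σ-finite measure
space with `μ(Ω) ≠ 0`, `𝓧` a vector subspace of measurable mappings containing all
truncations `1_A·z` (`μ(A) < ∞`, `z` measurable and bounded), and let `φ` be a normal
integrand with nonempty epigraphs admitting `x̄ ∈ 𝓧` with integrable positive part.
Then infimization and integration can be interchanged. -/
theorem interchange_separable_banach
    {X : Type*} [NormedAddCommGroup X] [NormedSpace ℝ X] [CompleteSpace X]
    [TopologicalSpace.SeparableSpace X] [MeasurableSpace X] [BorelSpace X]
    {Ω : Type*} [MeasurableSpace Ω] (μ : Measure Ω) [SigmaFinite μ]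
    (hμ : μ Set.univ ≠ 0)
    (𝓧 : Submodule ℝ (Ω → X)) (h𝓧meas : ∀ x ∈ 𝓧, Measurable x)
    (φ : Ω → X → EReal)
    (hφmeas : Measurable (Function.uncurry φ))
    (hepi : ∀ ω, (epi (φ ω)).Nonempty)
    -- (i)
    (h𝓧trunc : ∀ A : Set Ω, MeasurableSet A → μ A < ⊤ → ∀ z : Ω → X, Measurable z →
      (∃ C : ℝ, ∀ ω, ‖z ω‖ ≤ C) → A.indicator z ∈ 𝓧)
    -- (ii)
    (hnormal : NormalIntegrand φ)
    -- (iii)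
    (xbar : Ω → X) (hxbar : xbar ∈ 𝓧)
    (hxbarint : ∫⁻ ω, (φ ω (xbar ω)).posToENNReal ∂μ ≠ ⊤) :
    (⨅ x : 𝓧, eIntegral μ fun ω => φ ω ((x : Ω → X) ω)) =
      eIntegral μ fun ω => ⨅ v : X, φ ω v := by
  classical
  have : SecondCountableTopology X := UniformSpace.secondCountable_of_separable X
  obtain ⟨-, xs, ρ, hxs, hρ, hdense⟩ := hnormal
  have hmeq : ∀ ω, ⨅ v, φ ω v = ⨅ n, (ρ n ω : EReal) := fun ω =>
    iInf_eq_iInf_of_dense (φ ω) (fun n => xs n ω) (fun n => ρ n ω) (hdense ω).1 (hdense ω).2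
  have hmm : Measurable fun ω => ⨅ v, φ ω v := by
    simp_rw [hmeq]
    exact Measurable.iInf fun n => measurable_coe_real_ereal.comp (hρ n)
  apply le_antisymm
  swap
  · exact le_iInf fun x => eIntegral_mono_ae (ae_of_all _ fun ω => iInf_le _ _)
  have hmtop : ∀ ω, ⨅ v, φ ω v ≠ ⊤ := fun ω => by
    obtain ⟨p, hp⟩ := hepi ω
    exact (((iInf_le _ p.1).trans hp).trans_lt (EReal.coe_lt_top _)).ne
  have hmpos : ∫⁻ ω, (⨅ v, φ ω v).posToENNReal ∂μ ≠ ⊤ :=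
    ne_top_of_le_ne_top hxbarint (lintegral_mono fun ω => posToENNReal_mono (iInf_le _ _))
  refine le_of_forall_gt fun c₀ hc₀ => ?_
  obtain ⟨c, hc, hcc₀⟩ := EReal.lt_iff_exists_real_btwn.1 hc₀
  refine lt_trans ?_ hcc₀
  obtain ⟨α, hαm, hαi, hmα, hαc⟩ := exists_integrable_gt _ hmm hmtop hmpos c hc
  obtain ⟨y, hym, hyα⟩ := exists_measurable_selection φ xs ρ hxs hρ (fun ω => (hdense ω).1) α hαm
    (fun ω => hmeq ω ▸ hmα ω)
  have hxm : Measurable xbar := h𝓧meas _ hxbar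
  have hdm : Measurable fun ω => y ω - xbar ω := hym.sub hxm
  set B : ℕ → Set Ω := fun n => {ω | ‖y ω - xbar ω‖ ≤ n} with hB
  have hBm : ∀ n, MeasurableSet (B n) := fun n => measurableSet_le hdm.norm measurable_const
  set A : ℕ → Set Ω := fun n => spanningSets μ n ∩ B n with hA
  have hAm : ∀ n, MeasurableSet (A n) := fun n => (measurableSet_spanningSets μ n).inter (hBm n)
  have hmem : ∀ n, xbar + (A n).indicator (fun ω => y ω - xbar ω) ∈ 𝓧 := fun n => by
    refine 𝓧.add_mem hxbar ?_
    -- The truncation hypothesis asks for a map bounded everywhere, hence the cut-off to `B n`.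
    have := h𝓧trunc (spanningSets μ n) (measurableSet_spanningSets μ n)
      (measure_spanningSets_lt_top μ n) ((B n).indicator fun ω => y ω - xbar ω)
      (hdm.indicator (hBm n)) ⟨n, fun ω => ?_⟩
    · rwa [indicator_indicator] at this
    · by_cases h : ω ∈ B n
      · rw [indicator_of_mem h]; exact h
      · rw [indicator_of_notMem h]; simp
  have hφx : Measurable fun ω => φ ω (xbar ω) := hφmeas.comp (measurable_id.prodMk hxm)
  have hWm : Measurable fun ω => (φ ω (xbar ω)).posToENNReal := measurable_ereal_toENNReal.comp hφx
  set w : Ω → ℝ := fun ω => ((φ ω (xbar ω)).posToENNReal).toReal with hw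
  have hwm : Measurable w := hWm.ennreal_toReal
  have hwi : Integrable w μ := integrable_toReal_of_lintegral_ne_top hWm.aemeasurable hxbarint
  have hφw : ∀ᵐ ω ∂μ, φ ω (xbar ω) ≤ (w ω : EReal) := by
    filter_upwards [ae_lt_top hWm hxbarint] with ω hω
    rw [hw, EReal.coe_ennreal_toReal hω.ne]
    exact (le_max_right _ _).trans EReal.coe_toENNReal_eq_max.ge
  set g : ℕ → Ω → ℝ := fun n ω => if ω ∈ A n then α ω else w ω with hg
  have hgm : ∀ n, Measurable (g n) := fun n => Measurable.ite (hAm n) hαm hwm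
  have hbound : ∀ n ω, ‖g n ω‖ ≤ |α ω| + |w ω| := fun n ω => by
    simp only [hg, Real.norm_eq_abs]
    split_ifs
    · linarith [abs_nonneg (w ω)]
    · linarith [abs_nonneg (α ω)]
  have hdom : Integrable (fun ω => |α ω| + |w ω|) μ := hαi.abs.add hwi.abs
  have hlim : Filter.Tendsto (fun n => ∫ ω, g n ω ∂μ) Filter.atTop (𝓝 (∫ ω, α ω ∂μ)) := by
    refine tendsto_integral_of_dominated_convergence _ (fun n => (hgm n).aestronglyMeasurable)
      hdom (fun n => ae_of_all _ (hbound n)) (ae_of_all _ fun ω => ?_)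
    refine tendsto_const_nhds.congr' ?_
    obtain ⟨n₁, hn₁⟩ := exists_nat_ge ‖y ω - xbar ω‖
    filter_upwards [Filter.eventually_ge_atTop n₁,
      Filter.eventually_ge_atTop (spanningSetsIndex μ ω)] with n h1 h2
    have : ω ∈ A n := ⟨mem_spanningSets_of_index_le μ ω h2,
      hn₁.trans (by exact_mod_cast h1)⟩
    simp [hg, this]
  obtain ⟨n, hn⟩ := (hlim.eventually (gt_mem_nhds hαc)).exists
  have hgi : Integrable (g n) μ :=
    hdom.mono' (hgm n).aestronglyMeasurable (ae_of_all _ (hbound n))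
  refine (iInf_le _ ⟨_, hmem n⟩).trans_lt (lt_of_le_of_lt ?_ (EReal.coe_lt_coe_iff.2 hn))
  rw [← eIntegral_coe hgi]
  refine eIntegral_mono_ae ?_
  filter_upwards [hφw] with ω hω
  by_cases h : ω ∈ A n
  · simpa [hg, h] using hyα ω
  · simpa [hg, h] using hω
end
end

section
/- (Lemma 6(i).) Let X be a locally convex real topological vector space which is a Souslin space, let Y be a separable locally convex real topological vector space, and let ⟨·,·⟩ : X×Y → ℝ be a bilinear form placing X and Y in separating duality (⟨x,·⟩ = 0 implies x = 0, and ⟨·,y⟩ = 0 implies y = 0) such that the topologies are compatible with the pairing: the continuous linear functionals on X are exactly the maps ⟨·,y⟩ for y ∈ Y, and the continuous linear functionals on Y are exactly the maps ⟨x,·⟩ for x ∈ X. Then ⟨·,·⟩ : X×Y → ℝ is measurable with respect to the product σ-algebra B_X⊗B_Y of the Borel σ-algebras and the Borel σ-algebra of ℝ. -/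
/-!
The pairing is separately continuous, and that suffices once `X` has a countable network,
as it does for a Souslin space: if `f : P → X` is a continuous surjection from a Polish space and
`b` is a countable base of `P`, the sets `f '' u`, `u ∈ b`, form a network of `X`.

If `B x y > a`, choose a rational `q` with `a < q < B x y`. Some `f '' u` contains `x` and lies in
the open set `{x' | q < B x' y}`, so `B · y ≥ q` on `closure (f '' u)`. Hence
`{(x, y) | a < B x y}` is the countable union, over `u ∈ b` and rational `q > a`, of the rectangles
`closure (f '' u) ×ˢ {y | ∀ x ∈ f '' u, q ≤ B x y}`. Both sides of such a rectangle are closed: the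
second one is an intersection of closed sets, by continuity in `y`. The images `f '' u` need not
be Borel, which is why their closures are used.
-/

open MeasureTheory Topology Set
open scoped ENNReal NNReal

noncomputable section

/-- Joint measurability, for the product of the Borel σ-algebras, of a separately continuous
real function whose first variable ranges over a Souslin space. No countability is needed in the
second variable. -/
lemma measurable_of_separately_continuous {X Y : Type*}
    [TopologicalSpace X] [MeasurableSpace X] [BorelSpace X] (hX : IsSouslin X)
    [TopologicalSpace Y] [MeasurableSpace Y] [BorelSpace Y] (F : X → Y → ℝ)
    (hFx : ∀ y, Continuous fun x => F x y) (hFy : ∀ x, Continuous fun y => F x y) :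
    Measurable fun p : X × Y => F p.1 p.2 := by
  obtain ⟨P, tP, hP, f, hf, hsurj⟩ := hX
  let b := TopologicalSpace.countableBasis P
  have hb : TopologicalSpace.IsTopologicalBasis b := TopologicalSpace.isBasis_countableBasis P
  refine measurable_of_Ioi fun a => ?_
  have key : (fun p : X × Y => F p.1 p.2) ⁻¹' Ioi a =
      ⋃ u ∈ b, ⋃ q : ℚ, ⋃ _ : a < q,
        closure (f '' u) ×ˢ {y | ∀ x ∈ f '' u, (q : ℝ) ≤ F x y} := by
    ext ⟨x, y⟩
    simp only [mem_preimage, mem_Ioi, mem_iUnion, mem_prod, exists_prop]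
    constructor
    · intro h
      obtain ⟨q, haq, hqx⟩ := exists_rat_btwn h
      obtain ⟨p, rfl⟩ := hsurj x
      have ho : IsOpen {p' | (q : ℝ) < F (f p') y} :=
        isOpen_lt continuous_const ((hFx y).comp hf)
      obtain ⟨u, hu, hpu, hsub⟩ := hb.exists_subset_of_mem_open (a := p) hqx ho
      refine ⟨u, hu, q, haq, subset_closure (mem_image_of_mem f hpu), ?_⟩
      rintro _ ⟨p', hp', rfl⟩
      exact le_of_lt (hsub hp')
    · rintro ⟨u, -, q, haq, hx, hy⟩
      have hc : IsClosed {x' | (q : ℝ) ≤ F x' y} := isClosed_le continuous_const (hFx y)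
      exact haq.trans_le (closure_minimal hy hc hx)
  rw [key]
  refine MeasurableSet.biUnion (TopologicalSpace.countable_countableBasis P) fun u _ =>
    MeasurableSet.iUnion fun q => MeasurableSet.iUnion fun _ =>
      isClosed_closure.measurableSet.prod (IsClosed.measurableSet ?_)
  simp only [ofPred_forall]
  exact isClosed_biInter fun x _ => isClosed_le continuous_const (hFy x)

/-- **Lemma 6(i).**  Let `X` be a locally convex Souslin real topological vector space, `Y`
a separable locally convex real topological vector space, and `⟨·,·⟩ : X × Y → ℝ` a
separating bilinear pairing with which both topologies are compatible.  Then `⟨·,·⟩` is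
measurable with respect to the product σ-algebra `B_X ⊗ B_Y`. -/
theorem pairing_measurable
    {X : Type*} [AddCommGroup X] [Module ℝ X] [TopologicalSpace X] [T2Space X]
    [ContinuousAdd X] [ContinuousSMul ℝ X] [LocallyConvexSpace ℝ X]
    [MeasurableSpace X] [BorelSpace X]
    (hXSouslin : IsSouslin X)
    {Y : Type*} [AddCommGroup Y] [Module ℝ Y] [TopologicalSpace Y]
    [ContinuousAdd Y] [ContinuousSMul ℝ Y] [LocallyConvexSpace ℝ Y]
    [TopologicalSpace.SeparableSpace Y]
    [MeasurableSpace Y] [BorelSpace Y]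
    (B : X →ₗ[ℝ] Y →ₗ[ℝ] ℝ)
    (hsepX : ∀ x : X, (∀ y : Y, B x y = 0) → x = 0)
    (hsepY : ∀ y : Y, (∀ x : X, B x y = 0) → y = 0)
    (hcontX : ∀ y : Y, Continuous fun x : X => B x y)
    (hdualX : ∀ f : X →ₗ[ℝ] ℝ, Continuous f → ∃ y : Y, ∀ x : X, f x = B x y)
    (hcontY : ∀ x : X, Continuous fun y : Y => B x y)
    (hdualY : ∀ g : Y →ₗ[ℝ] ℝ, Continuous g → ∃ x : X, ∀ y : Y, g y = B x y) :
    Measurable fun p : X × Y => B p.1 p.2 := by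
  exact measurable_of_separately_continuous hXSouslin (fun x y => B x y) hcontX hcontY
end
end
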